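/- Fix an index n, a direction e ∈ ℝ², and Ψ ∈ ℂ^{L×K}. Suppose C_H = Ψ^H Q Q^H Ψ is Hermitian positive definite, let c(t) ∈ ℝ^K be the vector of (real, positive) diagonal entries of (Ψ^H Q(t) Q(t)^H Ψ)^{-1} for t near 0, and assume ν(c(0)) ≠ σ² c_k(0) for every k (the boundary set I_0(c(0)) is empty). Then the function t ↦ R(c(t)) is differentiable at t = 0 with derivative −(1/(ν ln 2)) · q̃_n^H (F ⊙ Λ^e) q̃_n, where ν = ν(c(0)), p = p(c(0)), F = Ψ C_H^{-1} Diag(p) C_H^{-1} Ψ^H, and ⊙ denotes the Hadamard (entrywise) product of matrices. -/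

import Mathlib

open Matrix
open scoped ComplexOrder

open Classical in
/-- The unique positive solution ν(c) of the water-filling equation
Σ_k max(ν − σ² c_k, 0) = P_T. -/
noncomputable def waterLevel (K : ℕ) (σ2 PT : ℝ) (c : Fin K → ℝ) : ℝ :=
  if h : ∃ ν : ℝ, 0 < ν ∧ ∑ k : Fin K, max (ν - σ2 * c k) 0 = PT then h.choose else 0

/-- The water-filling power allocation p_k(c) = max(ν(c)/c_k − σ², 0). -/
noncomputable def wfPower (K : ℕ) (σ2 PT : ℝ) (c : Fin K → ℝ) (k : Fin K) : ℝ :=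
  max (waterLevel K σ2 PT c / c k - σ2) 0

/-- The resulting sum rate R(c) = Σ_k log₂(1 + p_k(c)/σ²). -/
noncomputable def sumRate (K : ℕ) (σ2 PT : ℝ) (c : Fin K → ℝ) : ℝ :=
  ∑ k : Fin K, Real.logb 2 (1 + wfPower K σ2 PT c k / σ2)

/-- The field-response matrix of the antenna positions r with the n-th position
perturbed to r_n + t·e: entries Q(t)_{lm} = exp(j κ_l^T r_m(t)). -/
noncomputable def Qmat (L N : ℕ) (κ : Fin L → Fin 2 → ℝ) (r : Fin N → Fin 2 → ℝ)
    (n : Fin N) (e : Fin 2 → ℝ) (t : ℝ) : Matrix (Fin L) (Fin N) ℂ :=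
  Matrix.of fun l m =>
    Complex.exp (Complex.I * ((κ l ⬝ᵥ (if m = n then r m + t • e else r m) : ℝ) : ℂ))

lemma wl_unique (K : ℕ) (σ2 PT : ℝ) (hPT : 0 < PT) (c : Fin K → ℝ) (x y : ℝ)
    (hx : ∑ k : Fin K, max (x - σ2 * c k) 0 = PT)
    (hy : ∑ k : Fin K, max (y - σ2 * c k) 0 = PT) : x = y := by
  have key : ∀ x y : ℝ, ∑ k : Fin K, max (x - σ2 * c k) 0 = PT →
      ∑ k : Fin K, max (y - σ2 * c k) 0 = PT → ¬ x < y := by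
    intro x y hx hy hxy
    have hpos : 0 < ∑ k : Fin K, max (x - σ2 * c k) 0 := by rw [hx]; exact hPT
    obtain ⟨k, -, hk⟩ := Finset.exists_lt_of_sum_lt (s := Finset.univ)
      (f := fun _ : Fin K => (0:ℝ)) (g := fun k => max (x - σ2 * c k) 0) (by simpa using hpos)
    have : ∑ k : Fin K, max (x - σ2 * c k) 0 < ∑ k : Fin K, max (y - σ2 * c k) 0 := by
      apply Finset.sum_lt_sum
      · intro i _
        exact max_le_max (by linarith) le_rfl
      · refine ⟨k, Finset.mem_univ _, ?_⟩
        have h1 : 0 < x - σ2 * c k := by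
          rcases lt_max_iff.1 hk with h | h
          · exact h
          · exact absurd h (lt_irrefl _)
        rw [max_eq_left h1.le, max_eq_left (by linarith)]
        linarith
    linarith
  exact le_antisymm (not_lt.1 (key y x hy hx)) (not_lt.1 (key x y hx hy))

lemma wl_spec (K : ℕ) (hK : 1 ≤ K) (σ2 PT : ℝ) (hσ2 : 0 < σ2) (hPT : 0 < PT) (c : Fin K → ℝ)
    (hc : ∀ k, 0 < c k) : 0 < waterLevel K σ2 PT c ∧
      ∑ k : Fin K, max (waterLevel K σ2 PT c - σ2 * c k) 0 = PT := by
  have h : ∃ ν : ℝ, 0 < ν ∧ ∑ k : Fin K, max (ν - σ2 * c k) 0 = PT := by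
    have h0 : ∑ k : Fin K, max ((0:ℝ) - σ2 * c k) 0 = 0 := by
      apply Finset.sum_eq_zero
      intro k _
      apply max_eq_right
      have := mul_pos hσ2 (hc k)
      linarith
    let k0 : Fin K := ⟨0, hK⟩
    have h1 : PT ≤ ∑ k : Fin K, max ((PT + σ2 * c k0) - σ2 * c k) 0 := by
      have := Finset.single_le_sum (s := Finset.univ)
        (f := fun k => max ((PT + σ2 * c k0) - σ2 * c k) 0) (fun i _ => le_max_right _ _)
        (Finset.mem_univ k0)
      refine le_trans ?_ this
      exact le_trans (by linarith) (le_max_left _ _)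
    have hcont : Continuous (fun x : ℝ => ∑ k : Fin K, max (x - σ2 * c k) 0) := by fun_prop
    have hk := mul_pos hσ2 (hc k0)
    obtain ⟨x, hx, hx2⟩ := intermediate_value_Icc (by linarith : (0:ℝ) ≤ PT + σ2 * c k0)
      hcont.continuousOn (show PT ∈ Set.Icc _ _ from ⟨by simp only [h0]; exact hPT.le, h1⟩)
    refine ⟨x, lt_of_le_of_ne hx.1 ?_, hx2⟩
    rintro rfl
    simp only [h0] at hx2
    linarith
  unfold waterLevel
  rw [dif_pos h]
  exact h.choose_spec

lemma wl_eq (K : ℕ) (hK : 1 ≤ K) (σ2 PT : ℝ) (hσ2 : 0 < σ2) (hPT : 0 < PT) (c : Fin K → ℝ)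
    (hc : ∀ k, 0 < c k) (A : Finset (Fin K)) (x : ℝ)
    (hx : A.card * x = PT + σ2 * ∑ k ∈ A, c k)
    (hA : ∀ k ∈ A, σ2 * c k < x) (hA' : ∀ k ∉ A, x < σ2 * c k) :
    waterLevel K σ2 PT c = x := by
  apply wl_unique K σ2 PT hPT c _ _ (wl_spec K hK σ2 PT hσ2 hPT c hc).2
  rw [← Finset.sum_subset (Finset.subset_univ A)]
  · rw [Finset.sum_congr rfl (fun k hk => max_eq_left (by linarith [hA k hk]))]
    rw [Finset.sum_sub_distrib, Finset.sum_const, nsmul_eq_mul, hx, Finset.mul_sum]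
    ring
  · intro k _ hk
    exact max_eq_right (by linarith [hA' k hk])

lemma rate_deriv (K : ℕ) (hK : 1 ≤ K) (σ2 PT : ℝ) (hσ2 : 0 < σ2) (hPT : 0 < PT)
    (c : ℝ → Fin K → ℝ) (c' : Fin K → ℝ) (hpos : ∀ k, 0 < c 0 k)
    (hd : ∀ k, HasDerivAt (fun t => c t k) (c' k) 0)
    (hI0 : ∀ k : Fin K, waterLevel K σ2 PT (c 0) ≠ σ2 * c 0 k) :
    HasDerivAt (fun t : ℝ => sumRate K σ2 PT (c t))
      (-(1 / (waterLevel K σ2 PT (c 0) * Real.log 2)) * ∑ k, wfPower K σ2 PT (c 0) k * c' k) 0 := by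
  classical
  obtain ⟨hν, hs⟩ := wl_spec K hK σ2 PT hσ2 hPT (c 0) hpos
  set ν := waterLevel K σ2 PT (c 0) with hνd
  let A : Finset (Fin K) := Finset.univ.filter (fun k => σ2 * c 0 k < ν)
  have memA : ∀ k, k ∈ A ↔ σ2 * c 0 k < ν := by intro k; simp [A]
  have hsA : A.card * ν = PT + σ2 * ∑ k ∈ A, c 0 k := by
    rw [← hs, ← Finset.sum_subset (Finset.subset_univ A)]
    · rw [Finset.sum_congr rfl (fun k hk => max_eq_left (by linarith [(memA k).1 hk]))]
      rw [Finset.sum_sub_distrib, Finset.sum_const, nsmul_eq_mul, Finset.mul_sum]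
      ring
    · intro k _ hk
      rw [memA] at hk
      exact max_eq_right (by linarith)
  have hcard : (0:ℝ) < A.card := by
    rcases A.eq_empty_or_nonempty with h | h
    · rw [h] at hsA
      simp at hsA
      linarith
    · exact_mod_cast h.card_pos
  let w : ℝ → ℝ := fun t => (PT + σ2 * ∑ k ∈ A, c t k) / A.card
  have hw0 : w 0 = ν := by
    simp only [w]
    rw [← hsA]
    field_simp
  have hw : HasDerivAt w ((σ2 * ∑ k ∈ A, c' k) / A.card) 0 :=
    (((HasDerivAt.fun_sum (fun k _ => hd k)).const_mul σ2).const_add PT).div_const _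
  have hev : (fun t : ℝ => sumRate K σ2 PT (c t)) =ᶠ[nhds 0]
      fun t => ∑ k ∈ A, (Real.log (w t) - Real.log σ2 - Real.log (c t k)) / Real.log 2 := by
    have e1 : ∀ᶠ t in nhds (0:ℝ), ∀ k, 0 < c t k := by
      rw [Filter.eventually_all]
      intro k
      exact (hd k).continuousAt.eventually_const_lt (hpos k)
    have e2 : ∀ᶠ t in nhds (0:ℝ), ∀ k, k ∈ A → σ2 * c t k < w t := by
      rw [Filter.eventually_all]
      intro k
      rw [Filter.eventually_imp_distrib_left]
      intro hk
      refine ((hd k).continuousAt.const_mul σ2).eventually_lt hw.continuousAt ?_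
      rw [hw0]; exact (memA k).1 hk
    have e3 : ∀ᶠ t in nhds (0:ℝ), ∀ k, k ∉ A → w t < σ2 * c t k := by
      rw [Filter.eventually_all]
      intro k
      rw [Filter.eventually_imp_distrib_left]
      intro hk
      refine hw.continuousAt.eventually_lt ((hd k).continuousAt.const_mul σ2) ?_
      rw [hw0]
      rw [memA, not_lt] at hk
      exact lt_of_le_of_ne hk (hI0 k)
    filter_upwards [e1, e2, e3] with t h1 h2 h3
    have hwt : waterLevel K σ2 PT (c t) = w t := by
      apply wl_eq K hK σ2 PT hσ2 hPT (c t) h1 A _ _ h2 h3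
      simp only [w]
      field_simp
    unfold sumRate wfPower
    rw [hwt, ← Finset.sum_subset (Finset.subset_univ A)]
    · apply Finset.sum_congr rfl
      intro k hk
      have hck := h1 k
      have hkk := h2 k hk
      have hwp : 0 < w t := lt_trans (mul_pos hσ2 hck) hkk
      have : 0 ≤ w t / c t k - σ2 := by
        rw [sub_nonneg, le_div_iff₀ hck]; exact hkk.le
      rw [max_eq_left this, Real.logb, ← Real.log_div hwp.ne' hσ2.ne',
        ← Real.log_div (by positivity) hck.ne']
      congr 2
      field_simp
      ring
    · intro k _ hk
      have : w t / c t k - σ2 ≤ 0 := by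
        rw [sub_nonpos, div_le_iff₀ (h1 k)]; exact (h3 k hk).le
      rw [max_eq_right this]
      simp
  have hwne : w 0 ≠ 0 := by rw [hw0]; exact hν.ne'
  have hD : HasDerivAt
      (fun t => ∑ k ∈ A, (Real.log (w t) - Real.log σ2 - Real.log (c t k)) / Real.log 2)
      (∑ k ∈ A, (((σ2 * ∑ k ∈ A, c' k) / A.card) / w 0 - c' k / c 0 k) / Real.log 2) 0 :=
    HasDerivAt.fun_sum (fun k _ =>
      (((hw.log hwne).sub_const _).sub ((hd k).log (hpos k).ne')).div_const _)
  refine (hD.congr_of_eventuallyEq hev).congr_deriv ?_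
  have hl : Real.log 2 ≠ 0 := (Real.log_pos one_lt_two).ne'
  rw [hw0, ← Finset.sum_div, Finset.sum_sub_distrib, Finset.sum_const, nsmul_eq_mul]
  rw [← Finset.sum_subset (Finset.subset_univ A) (f := fun k => wfPower K σ2 PT (c 0) k * c' k)]
  · have : ∀ k ∈ A, wfPower K σ2 PT (c 0) k * c' k = ν * (c' k / c 0 k) - σ2 * c' k := by
      intro k hk
      unfold wfPower
      rw [← hνd, max_eq_left]
      · ring
      · rw [sub_nonneg, le_div_iff₀ (hpos k)]; exact ((memA k).1 hk).le
    rw [Finset.sum_congr rfl this, Finset.sum_sub_distrib, ← Finset.mul_sum, ← Finset.mul_sum]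
    field_simp
    ring
  · intro k _ hk
    rw [memA, not_lt] at hk
    unfold wfPower
    rw [← hνd, max_eq_right, zero_mul]
    rw [sub_nonpos, div_le_iff₀ (hpos k)]; exact hk

lemma inv_deriv {K : ℕ} (C : ℝ → Matrix (Fin K) (Fin K) ℂ) (C' : Matrix (Fin K) (Fin K) ℂ)
    (hC : ∀ i j, HasDerivAt (fun t => C t i j) (C' i j) 0) (h0 : IsUnit (C 0).det) (i j : Fin K) :
    HasDerivAt (fun t => (C t)⁻¹ i j) ((-((C 0)⁻¹ * C' * (C 0)⁻¹)) i j) 0 := by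
  have hcC : ContinuousAt C 0 := by
    refine continuousAt_pi.2 fun i => continuousAt_pi.2 fun j => (hC i j).continuousAt
  have hdet : ContinuousAt (fun t => (C t).det) 0 :=
    (Continuous.matrix_det continuous_id).continuousAt.comp hcC
  have hadj : ContinuousAt (fun t => (C t).adjugate) 0 :=
    (Continuous.matrix_adjugate continuous_id).continuousAt.comp hcC
  have hinv : ContinuousAt (fun t => (C t)⁻¹) 0 := by
    simp only [Matrix.inv_def, Ring.inverse_eq_inv']
    exact (hdet.inv₀ h0.ne_zero).smul hadj
  have hne : ∀ᶠ t in nhds (0:ℝ), (C t).det ≠ 0 := hdet.eventually_ne h0.ne_zero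
  rw [hasDerivAt_iff_tendsto_slope]
  have hS : Filter.Tendsto (fun t : ℝ => t⁻¹ • (C t - C 0)) (nhdsWithin 0 {0}ᶜ) (nhds C') := by
    refine tendsto_pi_nhds.2 fun i => tendsto_pi_nhds.2 fun j => ?_
    have := (hC i j).tendsto_slope
    refine this.congr fun t => ?_
    simp [slope_def_module]
  have hT : Filter.Tendsto (fun t : ℝ => -((C t)⁻¹ * (t⁻¹ • (C t - C 0)) * (C 0)⁻¹))
      (nhdsWithin 0 {0}ᶜ) (nhds (-((C 0)⁻¹ * C' * (C 0)⁻¹))) :=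
    (((hinv.tendsto.mono_left nhdsWithin_le_nhds).mul hS).mul tendsto_const_nhds).neg
  have hTij := (tendsto_pi_nhds.1 (tendsto_pi_nhds.1 hT i)) j
  refine hTij.congr' ?_
  filter_upwards [hne.filter_mono nhdsWithin_le_nhds] with t ht
  have e : -((C t)⁻¹ * (t⁻¹ • (C t - C 0)) * (C 0)⁻¹) = t⁻¹ • ((C t)⁻¹ - (C 0)⁻¹) := by
    rw [Matrix.mul_smul, Matrix.smul_mul, ← smul_neg, Matrix.mul_sub, Matrix.sub_mul,
      Matrix.nonsing_inv_mul _ (isUnit_iff_ne_zero.2 ht), Matrix.one_mul, Matrix.mul_assoc,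
      Matrix.mul_nonsing_inv _ h0, Matrix.mul_one, neg_sub]
  rw [e]
  simp [slope_def_module]

lemma Qmat_deriv (L N : ℕ) (κ : Fin L → Fin 2 → ℝ) (r : Fin N → Fin 2 → ℝ)
    (n : Fin N) (e : Fin 2 → ℝ) (l : Fin L) (m : Fin N) :
    HasDerivAt (fun t => Qmat L N κ r n e t l m)
      (if m = n then Complex.I * ((κ l ⬝ᵥ e : ℝ) : ℂ) * Qmat L N κ r n e 0 l m else 0) 0 := by
  by_cases h : m = n
  · subst h
    simp only [Qmat, Matrix.of_apply, if_true, dotProduct_add, dotProduct_smul, smul_eq_mul]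
    have h1 : HasDerivAt (fun t : ℝ => κ l ⬝ᵥ r m + t * (κ l ⬝ᵥ e)) (κ l ⬝ᵥ e) 0 := by
      simpa using ((hasDerivAt_id (0:ℝ)).mul_const (κ l ⬝ᵥ e)).const_add (κ l ⬝ᵥ r m)
    have := (h1.ofReal_comp.const_mul Complex.I).cexp
    refine this.congr_deriv ?_
    ring
  · simp only [Qmat, Matrix.of_apply, if_neg h]
    exact hasDerivAt_const _ _

lemma G_deriv (L N : ℕ) (κ : Fin L → Fin 2 → ℝ) (r : Fin N → Fin 2 → ℝ)
    (n : Fin N) (e : Fin 2 → ℝ) (i l : Fin L) :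
    HasDerivAt (fun t => (Qmat L N κ r n e t * (Qmat L N κ r n e t)ᴴ) i l)
      (Complex.I * (((κ i - κ l) ⬝ᵥ e : ℝ) : ℂ) * Qmat L N κ r n e 0 i n *
        star (Qmat L N κ r n e 0 l n)) 0 := by
  simp only [Matrix.mul_apply, Matrix.conjTranspose_apply]
  have := HasDerivAt.fun_sum (u := Finset.univ) (fun m (_ : m ∈ Finset.univ) =>
    (Qmat_deriv L N κ r n e i m).mul (Qmat_deriv L N κ r n e l m).star)
  refine this.congr_deriv ?_
  rw [Finset.sum_eq_single n]
  · simp [sub_dotProduct]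
    ring
  · intro b _ hb
    simp [hb]
  · simp

lemma C_deriv {L K : ℕ} (Ψ : Matrix (Fin L) (Fin K) ℂ) (G : ℝ → Matrix (Fin L) (Fin L) ℂ)
    (G' : Matrix (Fin L) (Fin L) ℂ) (hG : ∀ i l, HasDerivAt (fun t => G t i l) (G' i l) 0)
    (i j : Fin K) :
    HasDerivAt (fun t => (Ψᴴ * G t * Ψ) i j) ((Ψᴴ * G' * Ψ) i j) 0 := by
  simp only [Matrix.mul_apply]
  exact HasDerivAt.fun_sum fun a _ =>
    (HasDerivAt.fun_sum fun b _ => (hG b a).const_mul _).mul_const _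

lemma final_alg {L K : ℕ} (Ψ : Matrix (Fin L) (Fin K) ℂ) (B : Matrix (Fin K) (Fin K) ℂ)
    (p : Fin K → ℂ) (q : Fin L → ℂ) (Λ : Matrix (Fin L) (Fin L) ℂ) (hΛ : ∀ i l, Λ i l = - Λ l i) :
    ∑ k, p k * (-(B * (Ψᴴ * (Matrix.of fun i l => Λ i l * q i * star (q l)) * Ψ) * B)) k k =
      star q ⬝ᵥ ((Matrix.hadamard (Ψ * B * Matrix.diagonal p * B * Ψᴴ) Λ) *ᵥ q) := by
  set G' : Matrix (Fin L) (Fin L) ℂ := Matrix.of fun i l => Λ i l * q i * star (q l) with hG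
  have h1 : ∑ k, p k * (-(B * (Ψᴴ * G' * Ψ) * B)) k k =
      - Matrix.trace (Matrix.diagonal p * (B * (Ψᴴ * G' * Ψ) * B)) := by
    simp [Matrix.trace, Matrix.diagonal_mul]
  have h2 : Matrix.trace (Matrix.diagonal p * (B * (Ψᴴ * G' * Ψ) * B)) =
      Matrix.trace ((Ψ * B * Matrix.diagonal p * B * Ψᴴ) * G') := by
    rw [show Matrix.diagonal p * (B * (Ψᴴ * G' * Ψ) * B) =
      (Matrix.diagonal p * B * Ψᴴ * G') * (Ψ * B) by simp only [Matrix.mul_assoc],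
      Matrix.trace_mul_comm]
    simp only [Matrix.mul_assoc]
  rw [h1, h2]
  generalize Ψ * B * Matrix.diagonal p * B * Ψᴴ = F
  simp only [Matrix.trace, Matrix.diag_apply, Matrix.mul_apply, dotProduct, Matrix.mulVec,
    Matrix.hadamard_apply, Pi.star_apply, hG, Matrix.of_apply, Finset.mul_sum,
    ← Finset.sum_neg_distrib]
  refine Finset.sum_congr rfl fun l _ => Finset.sum_congr rfl fun i _ => ?_
  rw [hΛ i l]
  ring

/-- with C_H = Ψᴴ Q Qᴴ Ψ Hermitian positive definite, c(t) the (real,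
positive) diagonal of (Ψᴴ Q(t) Q(t)ᴴ Ψ)⁻¹ near t = 0, and no boundary users
(ν(c(0)) ≠ σ² c_k(0) for all k), the map t ↦ R(c(t)) is differentiable at 0
with derivative −(1/(ν ln 2)) · q̃_nᴴ (F ⊙ Λᵉ) q̃_n, where
F = Ψ C_H⁻¹ Diag(p) C_H⁻¹ Ψᴴ, ν = ν(c(0)), p = p(c(0)). -/
theorem stmt8 (K : ℕ) (hK : 1 ≤ K) (σ2 PT : ℝ) (hσ2 : 0 < σ2) (hPT : 0 < PT)
    (L N : ℕ) (κ : Fin L → Fin 2 → ℝ) (r : Fin N → Fin 2 → ℝ)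
    (n : Fin N) (e : Fin 2 → ℝ) (Ψ : Matrix (Fin L) (Fin K) ℂ)
    (hPD : (Ψᴴ * (Qmat L N κ r n e 0 * (Qmat L N κ r n e 0)ᴴ) * Ψ).PosDef)
    (c : ℝ → Fin K → ℝ)
    (hc : ∀ᶠ t in nhds (0 : ℝ), ∀ k : Fin K,
      0 < c t k ∧
        ((Ψᴴ * (Qmat L N κ r n e t * (Qmat L N κ r n e t)ᴴ) * Ψ)⁻¹) k k = ((c t k : ℝ) : ℂ))
    (hI0 : ∀ k : Fin K, waterLevel K σ2 PT (c 0) ≠ σ2 * c 0 k) :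
    ∃ d : ℝ,
      HasDerivAt (fun t : ℝ => sumRate K σ2 PT (c t)) d 0 ∧
      (d : ℂ) =
        -(1 / (((waterLevel K σ2 PT (c 0) : ℝ) : ℂ) * ((Real.log 2 : ℝ) : ℂ))) *
          (star (fun l => Qmat L N κ r n e 0 l n) ⬝ᵥ
            ((Matrix.hadamard
                (Ψ * (Ψᴴ * (Qmat L N κ r n e 0 * (Qmat L N κ r n e 0)ᴴ) * Ψ)⁻¹ *
                  Matrix.diagonal (fun k => ((wfPower K σ2 PT (c 0) k : ℝ) : ℂ)) *
                  (Ψᴴ * (Qmat L N κ r n e 0 * (Qmat L N κ r n e 0)ᴴ) * Ψ)⁻¹ * Ψᴴ)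
                (Matrix.of (fun i l : Fin L => Complex.I * (((κ i - κ l) ⬝ᵥ e : ℝ) : ℂ)))) *ᵥ
              (fun l => Qmat L N κ r n e 0 l n))) := by
  set B := (Ψᴴ * (Qmat L N κ r n e 0 * (Qmat L N κ r n e 0)ᴴ) * Ψ)⁻¹ with hB
  set Λ : Matrix (Fin L) (Fin L) ℂ :=
    Matrix.of (fun i l : Fin L => Complex.I * (((κ i - κ l) ⬝ᵥ e : ℝ) : ℂ)) with hΛ
  set q : Fin L → ℂ := fun l => Qmat L N κ r n e 0 l n with hq
  set D : Matrix (Fin K) (Fin K) ℂ :=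
    -(B * (Ψᴴ * (Matrix.of fun i l => Λ i l * q i * star (q l)) * Ψ) * B) with hD
  have hinv : ∀ k, HasDerivAt
      (fun t => (Ψᴴ * (Qmat L N κ r n e t * (Qmat L N κ r n e t)ᴴ) * Ψ)⁻¹ k k) (D k k) 0 := by
    intro k
    refine inv_deriv (fun t => Ψᴴ * (Qmat L N κ r n e t * (Qmat L N κ r n e t)ᴴ) * Ψ) _ ?_
      (isUnit_iff_ne_zero.2 hPD.det_pos.ne') k k
    intro i j
    exact C_deriv Ψ (fun t => Qmat L N κ r n e t * (Qmat L N κ r n e t)ᴴ) _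
      (fun i l => G_deriv L N κ r n e i l) i j
  have hcC : ∀ k, HasDerivAt (fun t => ((c t k : ℝ) : ℂ)) (D k k) 0 := by
    intro k
    refine (hinv k).congr_of_eventuallyEq ?_
    filter_upwards [hc] with t ht
    exact (ht k).2.symm
  have hcR : ∀ k, HasDerivAt (fun t => c t k) (D k k).re 0 := by
    intro k
    exact Complex.reCLM.hasFDerivAt.comp_hasDerivAt (0:ℝ) (hcC k)
  have hre : ∀ k, (((D k k).re : ℝ) : ℂ) = D k k := fun k =>
    (hcR k).ofReal_comp.unique (hcC k)
  have hpos : ∀ k, 0 < c 0 k := fun k => (hc.self_of_nhds k).1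
  refine ⟨_, rate_deriv K hK σ2 PT hσ2 hPT c _ hpos hcR hI0, ?_⟩
  rw [← final_alg Ψ B (fun k => ((wfPower K σ2 PT (c 0) k : ℝ) : ℂ)) q Λ]
  · push_cast
    simp only [hre]
    rfl
  · intro i l
    simp [hΛ, sub_dotProduct]
    ring
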